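/- arXiv:1807.07384 — 4 statements merged into one kernel-verified Lean document; each statement's English description precedes it below -/
import Mathlib

section
/- Let n ≥ 1. For each i = 0,…,n let u_i ∈ ℝ^n, let a_i be an arbitrary (n−1)×n real matrix and B_i an (n−1)×(n−1) real matrix. Let M be the (n+1)n × (n+1)n real matrix whose rows are grouped into n+1 blocks of n rows (one block per index i) and whose columns are grouped as: one column c_r, then n columns c_z, then for each j = 0,…,n a group of n−1 columns c_j, with entries given by: in row block i, the first row is (1 | u_i^T | 0 | ⋯ | 0); the remaining n−1 rows are (0 | a_i | 0 | ⋯ | B_i | ⋯ | 0), where B_i occupies the column group c_i and all other column groups c_j (j ≠ i) are zero. Then |det M| = |det V| · ∏_{i=0}^n |det B_i|, where V is the (n+1)×(n+1) matrix whose i-th row is (1, u_i^T). -/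
/-- **Block-determinant factorization for the Blaschke–Petkantschin Jacobian matrix.**
Let `n ≥ 1`. For `i = 0,…,n` let `uᵢ ∈ ℝⁿ`, `aᵢ` an arbitrary `(n-1)×n` matrix and `Bᵢ` an
`(n-1)×(n-1)` matrix. Let `M` be the `(n+1)n × (n+1)n` matrix with rows grouped in `n+1`
blocks of `n` rows and columns grouped as one column `c_r`, `n` columns `c_z`, and for each
`j = 0,…,n` a group of `n-1` columns `c_j`: in row block `i` the first row is
`(1 | uᵢᵀ | 0 | ⋯ | 0)` and the remaining `n-1` rows are `(0 | aᵢ | 0 ⋯ Bᵢ ⋯ 0)` with `Bᵢ`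
occupying column group `c_i`. Then (for any identification `e` of the row and column index
types) `|det M| = |det V| · ∏ᵢ |det Bᵢ|`, where `V` is the `(n+1)×(n+1)` matrix whose `i`-th
row is `(1, uᵢᵀ)`. -/
theorem abs_det_blaschke_petkantschin_block_matrix
    (n : ℕ) (hn : 1 ≤ n)
    (u : Fin (n + 1) → Fin n → ℝ)
    (a : Fin (n + 1) → Matrix (Fin (n - 1)) (Fin n) ℝ)
    (B : Fin (n + 1) → Matrix (Fin (n - 1)) (Fin (n - 1)) ℝ)
    (M : Matrix (Fin (n + 1) × (Unit ⊕ Fin (n - 1)))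
          ((Unit ⊕ Fin n) ⊕ Fin (n + 1) × Fin (n - 1)) ℝ)
    (hM1 : ∀ i, M (i, Sum.inl ()) (Sum.inl (Sum.inl ())) = 1)
    (hMu : ∀ i j, M (i, Sum.inl ()) (Sum.inl (Sum.inr j)) = u i j)
    (hM0 : ∀ i p, M (i, Sum.inl ()) (Sum.inr p) = 0)
    (hMr : ∀ i l, M (i, Sum.inr l) (Sum.inl (Sum.inl ())) = 0)
    (hMa : ∀ i l j, M (i, Sum.inr l) (Sum.inl (Sum.inr j)) = a i l j)
    (hMB : ∀ i l j m, M (i, Sum.inr l) (Sum.inr (j, m)) = if j = i then B i l m else 0)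
    (e : Fin (n + 1) × (Unit ⊕ Fin (n - 1)) ≃ (Unit ⊕ Fin n) ⊕ Fin (n + 1) × Fin (n - 1)) :
    |(M.submatrix id e).det|
      = |(Matrix.of fun i j => Fin.cons (1 : ℝ) (u i) j).det| * ∏ i, |(B i).det| := by
  let f : Fin (n + 1) ⊕ (Fin (n - 1) × Fin (n + 1)) ≃ Fin (n + 1) × (Unit ⊕ Fin (n - 1)) :=
    { toFun := Sum.elim (fun i => (i, Sum.inl ())) (fun p => (p.2, Sum.inr p.1))
      invFun := fun q => Sum.elim (fun _ => Sum.inl q.1) (fun l => Sum.inr (l, q.1)) q.2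
      left_inv := by rintro (i | ⟨l, i⟩) <;> rfl
      right_inv := by rintro ⟨i, (_ | l)⟩ <;> rfl }
  let g0 : Fin (n + 1) ≃ Unit ⊕ Fin n :=
    { toFun := fun j => Fin.cases (Sum.inl ()) (fun k => Sum.inr k) j
      invFun := Sum.elim (fun _ => 0) Fin.succ
      left_inv := by
        intro j
        refine Fin.cases ?_ (fun k => ?_) j <;> rfl
      right_inv := by rintro (_ | k) <;> rfl }
  let g : Fin (n + 1) ⊕ (Fin (n - 1) × Fin (n + 1)) ≃
      (Unit ⊕ Fin n) ⊕ Fin (n + 1) × Fin (n - 1) :=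
    Equiv.sumCongr g0 (Equiv.prodComm _ _)
  let C : Matrix (Fin (n - 1) × Fin (n + 1)) (Fin (n + 1)) ℝ :=
    Matrix.of fun p j => M (p.2, Sum.inr p.1) (Sum.inl (g0 j))
  have hN : M.submatrix f g = Matrix.fromBlocks
      (Matrix.of fun i j => Fin.cons (1 : ℝ) (u i) j) 0 C (Matrix.blockDiagonal B) := by
    ext r c
    rcases r with i | ⟨l, i⟩ <;> rcases c with j | ⟨m, j⟩
    · refine Fin.cases ?_ (fun k => ?_) j
      · exact hM1 i
      · exact hMu i k
    · exact hM0 i _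
    · rfl
    · refine (hMB i l j m).trans ?_
      simp only [Matrix.fromBlocks_apply₂₂, Matrix.blockDiagonal_apply, eq_comm]
  have hS : M.submatrix id e = (M.submatrix f g).submatrix f.symm (e.trans g.symm) := by
    ext r c
    simp
  rw [hS, Matrix.abs_det_submatrix_equiv_equiv, hN, Matrix.det_fromBlocks_zero₁₂,
    Matrix.det_blockDiagonal, abs_mul, Finset.abs_prod]
end

section
/- Let d ≥ 1, let c_1, …, c_d ∈ ℝ, and let A_0, A_1, B_0, B_1 : (0,∞) → (d×d real matrices) satisfy, as r → 0⁺: (A_i)(r)_{mm} = 1 − (c_m/2)·r² + o(r²) for i = 0,1 and each m; (A_i)(r)_{lm} = o(r) for l ≠ m; (B_0)(r)_{mm} = r − (c_m/6)·r³ + o(r³); (B_1)(r)_{mm} = −(r − (c_m/6)·r³) + o(r³); and (B_i)(r)_{lm} = o(r²) for l ≠ m. Let D(r) be the 2d × 2d block matrix [[A_0(r), B_0(r)], [A_1(r), B_1(r)]]. Then |det D(r)| = 2^d·(r^d − (2/3)·(c_1 + ⋯ + c_d)·r^{d+2}) + o(r^{d+2}) as r → 0⁺. -/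
open Asymptotics Filter
open scoped Topology

lemma tp_littleO_pow {m n : ℕ} (h : n < m) :
    (fun r : ℝ => r ^ m) =o[𝓝[>] 0] fun r : ℝ => r ^ n :=
  (isLittleO_pow_pow h).mono nhdsWithin_le_nhds

lemma tp_bigO_pow {m n : ℕ} (h : n ≤ m) :
    (fun r : ℝ => r ^ m) =O[𝓝[>] 0] fun r : ℝ => r ^ n := by
  rcases h.eq_or_lt with rfl | h
  · exact isBigO_refl _ _
  · exact (tp_littleO_pow h).isBigO

lemma tp_two_off {ι β : Type*} [Fintype ι] [DecidableEq ι] [DecidableEq β] (b : ι → β)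
    (σ : Equiv.Perm ι) (i : ι) (hi : b (σ i) ≠ b i) : ∃ j, j ≠ i ∧ b (σ j) ≠ b j := by
  by_contra! H
  let F : Finset ι := Finset.univ.filter (fun j => b j = b i)
  have hiF : i ∈ F := by simp [F]
  have h1 : F.map σ.symm.toEmbedding ⊆ F.erase i := by
    intro j hj
    rw [Finset.mem_map_equiv] at hj
    simp only [F, Finset.mem_filter, Finset.mem_univ, true_and, Equiv.symm_symm] at hj
    have hne : j ≠ i := by
      rintro rfl
      exact hi hj
    simp [F, hne, ← H j hne, hj]
  have h2 := Finset.card_le_card h1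
  rw [Finset.card_map, Finset.card_erase_of_mem hiF] at h2
  have : 0 < F.card := Finset.card_pos.mpr ⟨i, hiF⟩
  omega

lemma tp_det_off {ι β : Type*} [Fintype ι] [DecidableEq ι] [DecidableEq β] (b : ι → β)
    (M : ℝ → Matrix ι ι ℝ) (w : ι → ℝ → ℝ)
    (hM : ∀ i j, (fun r => M r i j) =O[𝓝[>] 0] w j)
    (hoff : ∀ i j, b i ≠ b j → (fun r => M r i j) =o[𝓝[>] 0] fun r => r * w j r) :
    (fun r => (M r).det - (Matrix.of fun i j => if b i = b j then M r i j else 0).det)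
      =o[𝓝[>] 0] fun r => r ^ 2 * ∏ i, w i r := by
  simp only [Matrix.det_apply, ← Finset.sum_sub_distrib, ← smul_sub]
  refine IsLittleO.fun_sum (fun σ _ => ?_)
  have key : (fun r => (∏ i, M r (σ i) i) -
      ∏ i, (Matrix.of fun i j => if b i = b j then M r i j else 0) (σ i) i)
      =o[𝓝[>] 0] fun r => r ^ 2 * ∏ i, w i r := by
    by_cases hσ : ∀ i, b (σ i) = b i
    · simp only [Matrix.of_apply, hσ, if_true, sub_self]
      exact isLittleO_zero _ _
    · push Not at hσ
      obtain ⟨i, hi⟩ := hσ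
      obtain ⟨j, hji, hj⟩ := tp_two_off b σ i hi
      have h0 : ∀ r, ∏ i, (Matrix.of fun i j => if b i = b j then M r i j else 0) (σ i) i = 0 :=
        fun r => Finset.prod_eq_zero (Finset.mem_univ i) (by simp [hi])
      simp only [h0, sub_zero]
      have hs : ∀ f : ι → ℝ, ∏ k, f k =
          f i * (f j * ∏ k ∈ (Finset.univ.erase i).erase j, f k) := by
        intro f
        rw [Finset.mul_prod_erase _ _ (by simp [hji]), Finset.mul_prod_erase _ _ (by simp)]
      simp only [hs]
      have h1 := (hoff _ _ hi).mul ((hoff _ _ hj).mul_isBigO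
        (IsBigO.finsetProd (s := (Finset.univ.erase i).erase j) fun k _ => hM (σ k) k))
      refine h1.congr_right fun r => ?_
      ring
  rcases Int.units_eq_one_or (Equiv.Perm.sign σ) with h | h
  · simpa [h] using key
  · simpa [h] using key.neg_left

lemma tp_prod {d : ℕ} (c : Fin d → ℝ) (q : Fin d → ℝ → ℝ)
    (hq : ∀ m, (fun r => q m r - 2 * (r - 2 / 3 * c m * r ^ 3)) =o[𝓝[>] 0] fun r : ℝ => r ^ 3)
    (s : Finset (Fin d)) :
    (fun r => ∏ m ∈ s, q m r -
      2 ^ s.card * (r ^ s.card - 2 / 3 * (∑ m ∈ s, c m) * r ^ (s.card + 2)))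
      =o[𝓝[>] 0] fun r : ℝ => r ^ (s.card + 2) := by
  induction s using Finset.induction_on with
  | empty => simpa using isLittleO_zero _ _
  | insert a s ha ih =>
    simp only [Finset.prod_insert ha, Finset.sum_insert ha, Finset.card_insert_of_notMem ha]
    set k := s.card
    set S := ∑ m ∈ s, c m
    have hX : (fun r : ℝ => 2 ^ k * (r ^ k - 2 / 3 * S * r ^ (k + 2))) =O[𝓝[>] 0]
        fun r : ℝ => r ^ k :=
      ((isBigO_refl _ _).sub ((tp_bigO_pow (by omega)).const_mul_left _)).const_mul_left _
    have hl : (fun r : ℝ => 2 * (r - 2 / 3 * c a * r ^ 3)) =O[𝓝[>] 0] fun r : ℝ => r ^ 1 := by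
      refine (IsBigO.sub ?_ ((tp_bigO_pow (by omega)).const_mul_left _)).const_mul_left _
      simpa using isBigO_refl _ _
    have hqa : (q a) =O[𝓝[>] 0] fun r : ℝ => r ^ 1 := by
      have := ((hq a).isBigO.trans (tp_bigO_pow (show 1 ≤ 3 by omega))).add hl
      simpa using this
    have e1 := (hq a).mul_isBigO hX
    have e2 := hqa.mul_isLittleO ih
    have e3 : (fun r : ℝ => (2 ^ (k + 1) * (4 / 9) * c a * S) * r ^ (k + 5)) =o[𝓝[>] 0]
        fun r : ℝ => r ^ (k + 3) := (tp_littleO_pow (by omega)).const_mul_left _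
    have e1' := e1.congr_right (g₂ := fun r : ℝ => r ^ (k + 3)) (fun r => by ring)
    have e2' := e2.congr_right (g₂ := fun r : ℝ => r ^ (k + 3)) (fun r => by ring)
    refine ((e1'.add e2').add e3).congr (fun r => ?_) (fun r => ?_)
    · ring
    · ring

lemma tp_det_diag {d : ℕ} (a b a' b' : Fin d → ℝ) :
    (Matrix.fromBlocks (Matrix.diagonal a) (Matrix.diagonal b) (Matrix.diagonal a')
      (Matrix.diagonal b')).det = ∏ m, (a m * b' m - b m * a' m) := by
  let e : Fin 2 × Fin d ≃ Fin d ⊕ Fin d :=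
    (Equiv.prodCongr finTwoEquiv (Equiv.refl _)).trans (Equiv.boolProdEquivSum _)
  rw [← Matrix.det_submatrix_equiv_self e]
  have : (Matrix.fromBlocks (Matrix.diagonal a) (Matrix.diagonal b) (Matrix.diagonal a')
      (Matrix.diagonal b')).submatrix e e =
      Matrix.blockDiagonal (fun m => !![a m, b m; a' m, b' m]) := by
    ext ⟨i, k⟩ ⟨j, l⟩
    fin_cases i <;> fin_cases j <;>
      simp [e, finTwoEquiv, Matrix.blockDiagonal_apply, Matrix.diagonal_apply]
  rw [this, Matrix.det_blockDiagonal]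
  simp [Matrix.det_fin_two]

/-- **Determinant expansion for the two-point Blaschke–Petkantschin Jacobian.**
Given `d×d` matrix functions `A₀, A₁, B₀, B₁` with, as `r → 0⁺`,
`(Aᵢ)(r)_{mm} = 1 - (c_m/2) r² + o(r²)`, `(Aᵢ)(r)_{lm} = o(r)` for `l ≠ m`,
`(B₀)(r)_{mm} = r - (c_m/6) r³ + o(r³)`, `(B₁)(r)_{mm} = -(r - (c_m/6) r³) + o(r³)`, and
`(Bᵢ)(r)_{lm} = o(r²)` for `l ≠ m`, the `2d×2d` block matrix `D(r) = [[A₀,B₀],[A₁,B₁]]`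
satisfies `|det D(r)| = 2^d (r^d - (2/3)(c₁+⋯+c_d) r^{d+2}) + o(r^{d+2})`. -/
theorem abs_det_two_point_block_expansion
    (d : ℕ) (hd : 1 ≤ d) (c : Fin d → ℝ)
    (A₀ A₁ B₀ B₁ : ℝ → Matrix (Fin d) (Fin d) ℝ)
    (hA₀diag : ∀ m, (fun r => A₀ r m m - (1 - c m / 2 * r ^ 2)) =o[𝓝[>] 0] fun r : ℝ => r ^ 2)
    (hA₁diag : ∀ m, (fun r => A₁ r m m - (1 - c m / 2 * r ^ 2)) =o[𝓝[>] 0] fun r : ℝ => r ^ 2)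
    (hA₀off : ∀ l m, l ≠ m → (fun r => A₀ r l m) =o[𝓝[>] 0] fun r : ℝ => r)
    (hA₁off : ∀ l m, l ≠ m → (fun r => A₁ r l m) =o[𝓝[>] 0] fun r : ℝ => r)
    (hB₀diag : ∀ m, (fun r => B₀ r m m - (r - c m / 6 * r ^ 3)) =o[𝓝[>] 0] fun r : ℝ => r ^ 3)
    (hB₁diag : ∀ m,
      (fun r => B₁ r m m - (-(r - c m / 6 * r ^ 3))) =o[𝓝[>] 0] fun r : ℝ => r ^ 3)
    (hB₀off : ∀ l m, l ≠ m → (fun r => B₀ r l m) =o[𝓝[>] 0] fun r : ℝ => r ^ 2)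
    (hB₁off : ∀ l m, l ≠ m → (fun r => B₁ r l m) =o[𝓝[>] 0] fun r : ℝ => r ^ 2) :
    (fun r => |(Matrix.fromBlocks (A₀ r) (B₀ r) (A₁ r) (B₁ r)).det|
        - 2 ^ d * (r ^ d - 2 / 3 * (∑ m, c m) * r ^ (d + 2)))
      =o[𝓝[>] 0] fun r : ℝ => r ^ (d + 2) := by
  have hAO : ∀ A : ℝ → Matrix (Fin d) (Fin d) ℝ,
      (∀ m, (fun r => A r m m - (1 - c m / 2 * r ^ 2)) =o[𝓝[>] 0] fun r : ℝ => r ^ 2) →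
      ∀ m, (fun r => A r m m) =O[𝓝[>] 0] fun _ : ℝ => (1 : ℝ) := by
    intro A h m
    have h2 : (fun r : ℝ => r ^ 2) =O[𝓝[>] 0] fun _ : ℝ => (1 : ℝ) := by
      simpa using tp_bigO_pow (show 0 ≤ 2 by omega)
    have := ((h m).isBigO.trans h2).add
      ((isBigO_refl (fun _ : ℝ => (1 : ℝ)) _).sub (h2.const_mul_left (c m / 2)))
    simpa using this
  have hlO : ∀ m, (fun r : ℝ => r - c m / 6 * r ^ 3) =O[𝓝[>] 0] fun r : ℝ => r := by
    intro m
    have h2 : (fun r : ℝ => r ^ 3) =O[𝓝[>] 0] fun r : ℝ => r := by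
      simpa using tp_bigO_pow (show 1 ≤ 3 by omega)
    exact (isBigO_refl _ _).sub (h2.const_mul_left _)
  have h31 : (fun r : ℝ => r ^ 3) =O[𝓝[>] 0] fun r : ℝ => r := by
    simpa using tp_bigO_pow (show 1 ≤ 3 by omega)
  have h21 : (fun r : ℝ => r ^ 2) =O[𝓝[>] 0] fun r : ℝ => r := by
    simpa using tp_bigO_pow (show 1 ≤ 2 by omega)
  have h10 : (fun r : ℝ => r) =O[𝓝[>] 0] fun _ : ℝ => (1 : ℝ) := by
    simpa using tp_bigO_pow (show 0 ≤ 1 by omega)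
  have hB₀O : ∀ m, (fun r => B₀ r m m) =O[𝓝[>] 0] fun r : ℝ => r := by
    intro m
    have := ((hB₀diag m).isBigO.trans h31).add (hlO m)
    simpa using this
  have hB₁O : ∀ m, (fun r => B₁ r m m) =O[𝓝[>] 0] fun r : ℝ => r := by
    intro m
    have := ((hB₁diag m).isBigO.trans h31).add (hlO m).neg_left
    simpa using this
  -- off-diagonal contribution
  have hdet := tp_det_off (Sum.elim id id : Fin d ⊕ Fin d → Fin d)
    (fun r => Matrix.fromBlocks (A₀ r) (B₀ r) (A₁ r) (B₁ r))
    (Sum.elim (fun _ _ => 1) (fun _ r => r)) (by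
      rintro (i | i) (j | j) <;> by_cases hij : i = j
      · subst hij; exact hAO _ hA₀diag i
      · exact (hA₀off i j hij).isBigO.trans h10
      · subst hij; exact hB₀O i
      · exact (hB₀off i j hij).isBigO.trans h21
      · subst hij; exact hAO _ hA₁diag i
      · exact (hA₁off i j hij).isBigO.trans h10
      · subst hij; exact hB₁O i
      · exact (hB₁off i j hij).isBigO.trans h21) (by
      rintro (i | i) (j | j) hij
      · simpa using hA₀off i j hij
      · simpa [← pow_two] using hB₀off i j hij
      · simpa using hA₁off i j hij
      · simpa [← pow_two] using hB₁off i j hij)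
  have hN : ∀ r, (Matrix.of fun i j : Fin d ⊕ Fin d =>
      if (Sum.elim id id i : Fin d) = Sum.elim id id j then
        Matrix.fromBlocks (A₀ r) (B₀ r) (A₁ r) (B₁ r) i j else 0).det =
      (-1) ^ d * ∏ m, (B₀ r m m * A₁ r m m - A₀ r m m * B₁ r m m) := by
    intro r
    have : (Matrix.of fun i j : Fin d ⊕ Fin d =>
      if (Sum.elim id id i : Fin d) = Sum.elim id id j then
        Matrix.fromBlocks (A₀ r) (B₀ r) (A₁ r) (B₁ r) i j else 0) =
      Matrix.fromBlocks (Matrix.diagonal fun m => A₀ r m m) (Matrix.diagonal fun m => B₀ r m m)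
        (Matrix.diagonal fun m => A₁ r m m) (Matrix.diagonal fun m => B₁ r m m) := by
      ext (i | i) (j | j) <;> by_cases hij : i = j <;> simp [hij]
    rw [this, tp_det_diag]
    have h := Finset.prod_const (s := (Finset.univ : Finset (Fin d))) (-1 : ℝ)
    rw [Finset.card_univ, Fintype.card_fin] at h
    rw [← h, ← Finset.prod_mul_distrib]
    exact Finset.prod_congr rfl fun m _ => by ring
  simp only [hN] at hdet
  have hprod := tp_prod c (fun m r => B₀ r m m * A₁ r m m - A₀ r m m * B₁ r m m) (by
    intro m
    have f1 := ((hB₀diag m).mul_isBigO (hAO _ hA₁diag m))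
    have f2 := ((hB₁diag m).mul_isBigO (hAO _ hA₀diag m))
    have f3 := (hlO m).mul_isLittleO (hA₁diag m)
    have f4 := (hlO m).mul_isLittleO (hA₀diag m)
    have f5 : (fun r : ℝ => (c m ^ 2 / 6) * r ^ 5) =o[𝓝[>] 0] fun r : ℝ => r ^ 3 :=
      (tp_littleO_pow (by omega)).const_mul_left _
    have f1' := f1.congr_right (g₂ := fun r : ℝ => r ^ 3) (fun r => by ring)
    have f2' := f2.congr_right (g₂ := fun r : ℝ => r ^ 3) (fun r => by ring)
    have f3' := f3.congr_right (g₂ := fun r : ℝ => r ^ 3) (fun r => by ring)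
    have f4' := f4.congr_right (g₂ := fun r : ℝ => r ^ 3) (fun r => by ring)
    refine ((((f1'.sub f2').add f3').add f4').add f5).congr_left fun r => ?_
    ring) Finset.univ
  simp only [Finset.card_univ, Fintype.card_fin] at hprod
  have hdet' := (hdet.const_mul_left ((-1 : ℝ) ^ d)).congr_right
    (g₂ := fun r : ℝ => r ^ (d + 2)) (fun r => by simp [Fintype.prod_sum_type]; ring)
  have hsum := hdet'.add hprod
  have hpos : ∀ᶠ r : ℝ in 𝓝[>] 0, 0 ≤ 2 ^ d * (r ^ d - 2 / 3 * (∑ m, c m) * r ^ (d + 2)) := by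
    have ht : Tendsto (fun r : ℝ => 1 - 2 / 3 * (∑ m, c m) * r ^ 2) (𝓝[>] 0) (𝓝 1) := by
      have : ContinuousAt (fun r : ℝ => 1 - 2 / 3 * (∑ m, c m) * r ^ 2) 0 := by fun_prop
      have h := this.tendsto
      simp only [ne_eq, OfNat.ofNat_ne_zero, not_false_eq_true, zero_pow, mul_zero, sub_zero] at h
      exact h.mono_left nhdsWithin_le_nhds
    filter_upwards [ht.eventually (lt_mem_nhds one_pos), self_mem_nhdsWithin] with r h1 h2
    have h2' : (0 : ℝ) < r := h2
    have : 2 ^ d * (r ^ d - 2 / 3 * (∑ m, c m) * r ^ (d + 2)) =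
      2 ^ d * r ^ d * (1 - 2 / 3 * (∑ m, c m) * r ^ 2) := by ring
    rw [this]
    positivity
  refine IsBigO.trans_isLittleO (IsBigO.of_bound 1 ?_) hsum
  filter_upwards [hpos] with r hr
  have hsq : ((-1 : ℝ) ^ d) * (-1) ^ d = 1 := by
    rw [← mul_pow]; simp
  set D := (Matrix.fromBlocks (A₀ r) (B₀ r) (A₁ r) (B₁ r)).det
  set X := 2 ^ d * (r ^ d - 2 / 3 * (∑ m, c m) * r ^ (d + 2))
  set P := ∏ m, (B₀ r m m * A₁ r m m - A₀ r m m * B₁ r m m)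
  have hE : (-1 : ℝ) ^ d * (D - (-1) ^ d * P) + (P - X) = (-1) ^ d * D - X := by
    linear_combination (-P) * hsq
  have hD : |D| = |(-1 : ℝ) ^ d * D| := by simp [abs_mul]
  rw [hE, one_mul, Real.norm_eq_abs, Real.norm_eq_abs, hD]
  nth_rewrite 1 [← abs_of_nonneg hr]
  exact abs_abs_sub_abs_le _ _
end

section
/- Let n ≥ 2. For each i = 0,…,n−1 let u_i ∈ ℝ^{n−1}, let A_i be an (n−1)×1 real column vector, let a_i be an arbitrary (n−1)×n real matrix whose last column is A_i, C_i an (n−1)×(n−1) real matrix, and B_i an (n−1)×(n−2) real matrix. Let M be the n² × n² real matrix whose rows are grouped into n blocks of n rows (one per i) and whose columns are grouped as: one column c_r, then n columns c_z, then n−1 columns c_v, then for each j a group of n−2 columns c_j, with entries: in row block i, the first row is (1 | (u_i^T, 0) | 0 | ⋯ | 0); the remaining n−1 rows are (0 | a_i | C_i | 0 ⋯ B_i ⋯ 0), where B_i occupies column group c_i, all other groups c_j (j ≠ i) being zero. Then |det M| = |det V| · |det D|, where V is the n×n matrix with i-th row (1, u_i^T), and D is the n(n−1) × n(n−1) matrix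 obtained by stacking, over i, the row blocks (A_i | C_i | 0 ⋯ B_i ⋯ 0). -/
/-- Regrouping of the rows: first rows of all blocks, then the rest. -/
def rowRegroup (α β : Type) : α ⊕ (α × β) ≃ α × (Unit ⊕ β) where
  toFun := Sum.elim (fun i => (i, Sum.inl ())) (fun p => (p.1, Sum.inr p.2))
  invFun := fun p => Sum.elim (fun _ => Sum.inl p.1) (fun l => Sum.inr (p.1, l)) p.2
  left_inv := by rintro (i | ⟨i, l⟩) <;> rfl
  right_inv := by rintro ⟨i, (_ | l)⟩ <;> rfl

/-- Regrouping of the columns. -/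
def colRegroup (F P : Type) :
    (Unit ⊕ F) ⊕ ((Unit ⊕ F) ⊕ P) ≃ Unit ⊕ ((F ⊕ Unit) ⊕ (F ⊕ P)) where
  toFun := Sum.elim (Sum.elim (fun _ => Sum.inl ()) (fun j => Sum.inr (Sum.inl (Sum.inl j))))
    (Sum.elim (Sum.elim (fun _ => Sum.inr (Sum.inl (Sum.inr ())))
      (fun j => Sum.inr (Sum.inr (Sum.inl j)))) (fun p => Sum.inr (Sum.inr (Sum.inr p))))
  invFun := Sum.elim (fun _ => Sum.inl (Sum.inl ())) (Sum.elim
    (Sum.elim (fun j => Sum.inl (Sum.inr j)) (fun _ => Sum.inr (Sum.inl (Sum.inl ()))))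
    (Sum.elim (fun j => Sum.inr (Sum.inl (Sum.inr j))) (fun p => Sum.inr (Sum.inr p))))
  left_inv := by rintro ((_ | _) | ((_ | _) | _)) <;> rfl
  right_inv := by rintro (_ | ((_ | _) | (_ | _))) <;> rfl

/-- Splitting off the first index. -/
def finSplit (k : ℕ) : Fin (k + 1) ≃ Unit ⊕ Fin k where
  toFun := Fin.cons (Sum.inl ()) Sum.inr
  invFun := Sum.elim (fun _ => 0) Fin.succ
  left_inv := by intro i; refine Fin.cases ?_ (fun j => ?_) i <;> simp
  right_inv := by rintro (_ | _) <;> simp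

/-- **Block-determinant factorization for the `(n-1)`-point (codimension one)
Blaschke–Petkantschin Jacobian matrix**, stated with `n = m + 2 ≥ 2`.
The `n² × n²` matrix `M` has rows grouped in `n` blocks of `n` rows and columns grouped as
one column `c_r`, `n` columns `c_z` (the last of which carries the column vectors `Aᵢ`),
`n-1` columns `c_v`, and for each `j` a group of `n-2` columns `c_j`. In row block `i` the
first row is `(1 | (uᵢᵀ, 0) | 0 | ⋯ | 0)` and the remaining `n-1` rows are
`(0 | aᵢ Aᵢ | Cᵢ | 0 ⋯ Bᵢ ⋯ 0)` with `Bᵢ` occupying column group `c_i`. Then (for any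
identifications `eM`, `eD` of the respective row and column index types)
`|det M| = |det V| · |det D|`, where `V` is the `n×n` matrix with `i`-th row `(1, uᵢᵀ)` and
`D` is the `n(n-1) × n(n-1)` matrix obtained by stacking the row blocks
`(Aᵢ | Cᵢ | 0 ⋯ Bᵢ ⋯ 0)`. -/
theorem abs_det_codim_one_block_factorization
    (m : ℕ)
    (u : Fin (m + 2) → Fin (m + 1) → ℝ)
    (a : Fin (m + 2) → Matrix (Fin (m + 1)) (Fin (m + 1)) ℝ)
    (A : Fin (m + 2) → Fin (m + 1) → ℝ)
    (C : Fin (m + 2) → Matrix (Fin (m + 1)) (Fin (m + 1)) ℝ)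
    (B : Fin (m + 2) → Matrix (Fin (m + 1)) (Fin m) ℝ)
    (M : Matrix (Fin (m + 2) × (Unit ⊕ Fin (m + 1)))
          (Unit ⊕ ((Fin (m + 1) ⊕ Unit) ⊕ (Fin (m + 1) ⊕ Fin (m + 2) × Fin m))) ℝ)
    (hM11 : ∀ i, M (i, Sum.inl ()) (Sum.inl ()) = 1)
    (hM1u : ∀ i j, M (i, Sum.inl ()) (Sum.inr (Sum.inl (Sum.inl j))) = u i j)
    (hM1z : ∀ i, M (i, Sum.inl ()) (Sum.inr (Sum.inl (Sum.inr ()))) = 0)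
    (hM1v : ∀ i j, M (i, Sum.inl ()) (Sum.inr (Sum.inr (Sum.inl j))) = 0)
    (hM1B : ∀ i p, M (i, Sum.inl ()) (Sum.inr (Sum.inr (Sum.inr p))) = 0)
    (hMr : ∀ i l, M (i, Sum.inr l) (Sum.inl ()) = 0)
    (hMa : ∀ i l j, M (i, Sum.inr l) (Sum.inr (Sum.inl (Sum.inl j))) = a i l j)
    (hMA : ∀ i l, M (i, Sum.inr l) (Sum.inr (Sum.inl (Sum.inr ()))) = A i l)
    (hMC : ∀ i l j, M (i, Sum.inr l) (Sum.inr (Sum.inr (Sum.inl j))) = C i l j)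
    (hMB : ∀ i l j p,
      M (i, Sum.inr l) (Sum.inr (Sum.inr (Sum.inr (j, p)))) = if j = i then B i l p else 0)
    (D : Matrix (Fin (m + 2) × Fin (m + 1))
          ((Unit ⊕ Fin (m + 1)) ⊕ Fin (m + 2) × Fin m) ℝ)
    (hDA : ∀ i l, D (i, l) (Sum.inl (Sum.inl ())) = A i l)
    (hDC : ∀ i l j, D (i, l) (Sum.inl (Sum.inr j)) = C i l j)
    (hDB : ∀ i l j p, D (i, l) (Sum.inr (j, p)) = if j = i then B i l p else 0)
    (eM : Fin (m + 2) × (Unit ⊕ Fin (m + 1))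
          ≃ Unit ⊕ ((Fin (m + 1) ⊕ Unit) ⊕ (Fin (m + 1) ⊕ Fin (m + 2) × Fin m)))
    (eD : Fin (m + 2) × Fin (m + 1) ≃ (Unit ⊕ Fin (m + 1)) ⊕ Fin (m + 2) × Fin m) :
    |(M.submatrix id eM).det|
      = |(Matrix.of fun i j => Fin.cons (1 : ℝ) (u i) j).det| * |(D.submatrix id eD).det| := by
  let R := rowRegroup (Fin (m + 2)) (Fin (m + 1))
  let K := (Equiv.sumCongr (finSplit (m + 1)) eD).trans
    (colRegroup (Fin (m + 1)) (Fin (m + 2) × Fin m))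
  have h1 := Matrix.abs_det_submatrix_equiv_equiv R (K.trans eM.symm) (M.submatrix id eM)
  have h2 : (M.submatrix id eM).submatrix R (K.trans eM.symm) =
      Matrix.fromBlocks (Matrix.of fun i j => Fin.cons (1 : ℝ) (u i) j) 0
        (Matrix.of fun p j => M (R (Sum.inr p)) (K (Sum.inl j))) (D.submatrix id eD) := by
    ext r c
    rcases r with i | ⟨i, l⟩ <;> rcases c with j | q
    · refine Fin.cases ?_ (fun j => ?_) j
      · simp [R, K, rowRegroup, colRegroup, finSplit, hM11]
      · simp [R, K, rowRegroup, colRegroup, finSplit, hM1u]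
    · rcases h : eD q with (⟨⟩ | j) | p <;>
        simp [R, K, rowRegroup, colRegroup, h, hM1z, hM1v, hM1B]
    · simp
    · rcases h : eD q with (⟨⟩ | j) | ⟨j, p⟩ <;>
        simp [R, K, rowRegroup, colRegroup, h, hMA, hMC, hMB, hDA, hDC, hDB]
  rw [← h1, h2, Matrix.det_fromBlocks_zero₁₂, abs_mul]
end

section
/- Let n ≥ 1 and let Φ : (0,∞) × ℝ^n × (S^{n-1})^{n+1} → (ℝ^n)^{n+1} be defined by Φ(r, z, u_0, …, u_n) = (z + r·u_0, …, z + r·u_n). Then Φ restricts to a bijection from the set A = {(r, z, u_0, …, u_n) : u_0, …, u_n are affinely independent} onto the set of (n+1)-tuples (x_0, …, x_n) ∈ (ℝ^n)^{n+1} whose points are affinely independent. -/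
theorem bp_affineIndependent_iff {n : ℕ} (r : ℝ) (hr : r ≠ 0) (z : EuclideanSpace ℝ (Fin n))
    (u : Fin (n + 1) → EuclideanSpace ℝ (Fin n)) :
    AffineIndependent ℝ (fun i => z + r • u i) ↔ AffineIndependent ℝ u := by
  have h := ((LinearEquiv.smulOfNeZero ℝ (EuclideanSpace ℝ (Fin n)) r hr).toAffineEquiv.trans
    (AffineEquiv.constVAdd ℝ (EuclideanSpace ℝ (Fin n)) z)).affineIndependent_iff (p := u)
  exact h

/-- **The spherical Blaschke–Petkantschin change of variables is a bijection.**
The map `Φ(r, z, u₀, …, uₙ) = (z + r·u₀, …, z + r·uₙ)`, defined on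
`ℝ × ℝⁿ × (S^{n-1})^{n+1}`, restricts to a bijection from the set of tuples with `r > 0`
and `u₀, …, uₙ` affinely independent onto the set of affinely independent
`(n+1)`-tuples of points of ℝⁿ. -/
theorem bijOn_blaschke_petkantschin_param (n : ℕ) (hn : 1 ≤ n) :
    Set.BijOn
      (fun p : ℝ × EuclideanSpace ℝ (Fin n) ×
          (Fin (n + 1) → Metric.sphere (0 : EuclideanSpace ℝ (Fin n)) 1) =>
        fun i => p.2.1 + p.1 • (p.2.2 i : EuclideanSpace ℝ (Fin n)))
      {p | 0 < p.1 ∧ AffineIndependent ℝ fun i => (p.2.2 i : EuclideanSpace ℝ (Fin n))}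
      {x : Fin (n + 1) → EuclideanSpace ℝ (Fin n) | AffineIndependent ℝ x} := by
  refine ⟨?_, ?_, ?_⟩
  · rintro ⟨r, z, u⟩ ⟨hr, hu⟩
    exact (bp_affineIndependent_iff r hr.ne' z _).2 hu
  · rintro ⟨r, z, u⟩ ⟨hr, hu⟩ ⟨r', z', u'⟩ ⟨hr', hu'⟩ h
    dsimp only at hr hu hr' hu' h
    have hx := (bp_affineIndependent_iff r hr.ne' z _).2 hu
    let s : Affine.Simplex ℝ (EuclideanSpace ℝ (Fin n)) n := ⟨_, hx⟩
    have htop : affineSpan ℝ (Set.range s.points) = ⊤ :=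
      hx.affineSpan_eq_top_iff_card_eq_finrank_add_one.2 (by simp)
    have hd : ∀ i, dist (s.points i) z = r := fun i => by
      simp [s, dist_eq_norm, norm_smul, abs_of_pos hr]
    have hd' : ∀ i, dist (s.points i) z' = r' := fun i => by
      have : s.points i = z' + r' • (u' i : EuclideanSpace ℝ (Fin n)) := congrFun h i
      rw [this]
      simp [dist_eq_norm, norm_smul, abs_of_pos hr']
    have hz : z = z' := (s.eq_circumcenter_of_dist_eq (by rw [htop]; trivial) hd).trans
      (s.eq_circumcenter_of_dist_eq (by rw [htop]; trivial) hd').symm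
    have hrr : r = r' := (s.eq_circumradius_of_dist_eq (by rw [htop]; trivial) hd).trans
      (s.eq_circumradius_of_dist_eq (by rw [htop]; trivial) hd').symm
    subst hz hrr
    have : u = u' := by
      funext i
      have hi := congrFun h i
      exact Subtype.ext (smul_right_injective _ hr.ne' (add_left_cancel hi))
    rw [this]
  · intro x hx
    obtain ⟨m, rfl⟩ : ∃ m, n = m + 1 := ⟨n - 1, by omega⟩
    let s : Affine.Simplex ℝ (EuclideanSpace ℝ (Fin (m + 1))) (m + 1) := ⟨x, hx⟩
    have hr : 0 < s.circumradius := s.circumradius_pos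
    have hd : ∀ i, ‖x i - s.circumcenter‖ = s.circumradius := fun i => by
      rw [← dist_eq_norm]; exact s.dist_circumcenter_eq_circumradius i
    have key : (fun i => s.circumcenter + s.circumradius •
        (s.circumradius⁻¹ • (x i - s.circumcenter))) = x := by
      funext i
      rw [smul_inv_smul₀ hr.ne', add_sub_cancel]
    refine ⟨(s.circumradius, s.circumcenter, fun i =>
      ⟨s.circumradius⁻¹ • (x i - s.circumcenter), ?_⟩), ⟨hr, ?_⟩, key⟩
    · rw [mem_sphere_zero_iff_norm, norm_smul, hd, norm_inv, Real.norm_of_nonneg hr.le,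
        inv_mul_cancel₀ hr.ne']
    · refine (bp_affineIndependent_iff s.circumradius hr.ne' s.circumcenter _).1 ?_
      dsimp only
      rw [key]
      exact hx
end
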